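/- arXiv:2007.10789 — 4 statements merged into one kernel-verified Lean document; each statement's English description precedes it below -/
import Mathlib

section
/- Let d > 0. There exists a constant C ≥ 1 such that for every v₀ ∈ W^{1,1}_1(ℝ,ℂ), every t ≥ 0, and all j, m ∈ {0,1}: ∫_ℝ |k^j ∂_k^m (e^{−d k² t} v₀(k))| dk ≤ C ‖v₀‖_{W^{1,1}_1} (1+t)^{−(1+j−m)/2}, where for m = 1 the derivative ∂_k(e^{−dk²t}v₀(k)) = −2dkt e^{−dk²t} v₀(k) + e^{−dk²t} ∂_k v₀(k) is taken in the weak sense. -/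
open MeasureTheory Real

noncomputable section

/-- `v'` is the weak derivative of `v : ℝ → ℂ`. -/
def HasWeakDeriv (v v' : ℝ → ℂ) : Prop :=
  LocallyIntegrable v volume ∧ LocallyIntegrable v' volume ∧
    ∀ φ : ℝ → ℝ, ContDiff ℝ (⊤ : ℕ∞) φ → HasCompactSupport φ →
      ∫ k, Complex.ofReal (deriv φ k) * v k = -∫ k, Complex.ofReal (φ k) * v' k

/-- A smooth compactly supported function of mean zero has a smooth compactly supported
primitive, bounded by its `L¹` norm. -/
theorem exists_primitive_of_integral_eq_zero {g : ℝ → ℝ} (hg : ContDiff ℝ (⊤ : ℕ∞) g)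
    (hc : HasCompactSupport g) (h0 : ∫ x, g x = 0) :
    ∃ φ : ℝ → ℝ, ContDiff ℝ (⊤ : ℕ∞) φ ∧ HasCompactSupport φ ∧ deriv φ = g ∧
      ∀ x, |φ x| ≤ ∫ y, |g y| := by
  have hcont : Continuous g := hg.continuous
  have hint : Integrable g := hcont.integrable_of_hasCompactSupport hc
  obtain ⟨R, hR⟩ := hc.isBounded.subset_ball 0
  have hsupp : ∀ x, x ∉ Set.Ioo (-R) R → g x = 0 := fun x hx => by
    refine image_eq_zero_of_notMem_tsupport fun h => hx ?_
    simpa [Real.ball_eq_Ioo] using hR h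
  have hder : ∀ x, HasDerivAt (fun x => ∫ y in (-R)..x, g y) (g x) x := fun x =>
    intervalIntegral.integral_hasDerivAt_right (hcont.intervalIntegrable _ _)
      (hcont.stronglyMeasurableAtFilter _ _) hcont.continuousAt
  have hderiv : deriv (fun x => ∫ y in (-R)..x, g y) = g := funext fun x => (hder x).deriv
  refine ⟨fun x => ∫ y in (-R)..x, g y, ?_, ?_, hderiv, fun x => ?_⟩
  · exact contDiff_infty_iff_deriv.2 ⟨fun x => (hder x).differentiableAt, by rwa [hderiv]⟩
  · refine HasCompactSupport.intro (isCompact_Icc (a := -R) (b := R)) fun x hx => ?_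
    rcases lt_or_ge x (-R) with h | h
    · refine intervalIntegral.integral_zero_ae (.of_forall fun y hy => hsupp y fun hy' => ?_)
      rw [Set.uIoc_of_ge h.le] at hy
      exact absurd hy.2 (not_le.2 hy'.1)
    · have hx' : R < x := by
        by_contra! hxR
        exact hx ⟨h, hxR⟩
      change ∫ y in (-R)..x, g y = 0
      rw [intervalIntegral.integral_eq_integral_of_support_subset, h0]
      intro y hy
      by_contra hn
      exact hy (hsupp y fun hy' => hn ⟨hy'.1, hy'.2.le.trans hx'.le⟩)
  · exact intervalIntegral.norm_integral_le_integral_norm_uIoc.trans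
      (setIntegral_le_integral hint.norm (.of_forall fun y => norm_nonneg _))

/-- The one-dimensional Sobolev embedding `W^{1,1} ⊆ L^∞`. -/
theorem exists_ae_norm_le_of_hasWeakDeriv :
    ∃ A : ℝ, 0 ≤ A ∧ ∀ v v' : ℝ → ℂ, HasWeakDeriv v v' → Integrable v → Integrable v' →
      ∀ᵐ k, ‖v k‖ ≤ A * ((∫ k, ‖v k‖) + ∫ k, ‖v' k‖) := by
  let b : ContDiffBump (0 : ℝ) := ⟨1, 2, one_pos, one_lt_two⟩
  set η : ℝ → ℝ := b.normed volume
  have hηd : ContDiff ℝ (⊤ : ℕ∞) η := b.contDiff_normed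
  have hηc : HasCompactSupport η := b.hasCompactSupport_normed
  have hηi : Integrable η := b.integrable_normed
  have hη1 : ∫ x, η x = 1 := b.integral_normed
  have hη0 : ∀ x, 0 ≤ η x := b.nonneg_normed
  obtain ⟨B, hB⟩ := hηc.exists_bound_of_continuous hηd.continuous
  have hB0 : 0 ≤ B := (norm_nonneg _).trans (hB 0)
  refine ⟨B + 2, by linarith, fun v v' hw hv hv' => ?_⟩
  have key : ∀ ψ : ℝ → ℝ, ContDiff ℝ (⊤ : ℕ∞) ψ → HasCompactSupport ψ → (∀ x, 0 ≤ ψ x) →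
      ∫ x, ψ x = 1 → ‖∫ x, (ψ x : ℂ) * v x‖ ≤ (B + 2) * ((∫ k, ‖v k‖) + ∫ k, ‖v' k‖) := by
    intro ψ hψd hψc hψ0 hψ1
    have hψi : Integrable ψ := hψd.continuous.integrable_of_hasCompactSupport hψc
    obtain ⟨φ, hφd, hφc, hφ', hφb⟩ := exists_primitive_of_integral_eq_zero (g := fun x => ψ x - η x)
      (hψd.sub hηd) (hψc.sub hηc) (by rw [integral_sub hψi hηi, hψ1, hη1, sub_self])
    have hφ2 : ∀ x, |φ x| ≤ 2 := fun x => (hφb x).trans <| by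
      calc ∫ y, |ψ y - η y| ≤ ∫ y, (ψ y + η y) := by
            refine integral_mono (hψi.sub hηi).abs (hψi.add hηi) fun y => ?_
            exact abs_le.2 ⟨by linarith [hψ0 y], by linarith [hη0 y]⟩
        _ = 2 := by rw [integral_add hψi hηi, hψ1, hη1]; norm_num
    obtain ⟨D, hD⟩ := hψc.exists_bound_of_continuous hψd.continuous
    have hiψ : Integrable fun x => (ψ x : ℂ) * v x :=
      hv.bdd_mul (c := D) (Complex.continuous_ofReal.comp hψd.continuous).aestronglyMeasurable
        (.of_forall fun x => by simpa using hD x)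
    have hiη : Integrable fun x => (η x : ℂ) * v x :=
      hv.bdd_mul (c := B) (Complex.continuous_ofReal.comp hηd.continuous).aestronglyMeasurable
        (.of_forall fun x => by simpa using hB x)
    have h := hw.2.2 φ hφd hφc
    simp only [hφ', Complex.ofReal_sub, sub_mul] at h
    rw [integral_sub hiψ hiη, sub_eq_iff_eq_add] at h
    have e1 : ‖∫ x, (η x : ℂ) * v x‖ ≤ B * ∫ k, ‖v k‖ := by
      rw [← integral_const_mul]
      refine norm_integral_le_of_norm_le (hv.norm.const_mul B) (.of_forall fun x => ?_)
      rw [norm_mul, Complex.norm_real]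
      gcongr
      exact hB x
    have e2 : ‖∫ x, (φ x : ℂ) * v' x‖ ≤ 2 * ∫ k, ‖v' k‖ := by
      rw [← integral_const_mul]
      refine norm_integral_le_of_norm_le (hv'.norm.const_mul 2) (.of_forall fun x => ?_)
      rw [norm_mul, Complex.norm_real]
      gcongr
      exact hφ2 x
    have n1 : 0 ≤ ∫ k, ‖v k‖ := integral_nonneg fun _ => norm_nonneg _
    have n2 : 0 ≤ ∫ k, ‖v' k‖ := integral_nonneg fun _ => norm_nonneg _
    rw [h]
    refine (norm_add_le _ _).trans ?_
    rw [norm_neg]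
    nlinarith
  let β : ℕ → ContDiffBump (0 : ℝ) := fun n =>
    ⟨1 / ((n : ℝ) + 1), 2 * (1 / ((n : ℝ) + 1)), by positivity,
      lt_two_mul_self (by positivity)⟩
  have hβ : Filter.Tendsto (fun n => (β n).rOut) Filter.atTop (nhds 0) := by
    simpa [β] using (tendsto_one_div_add_atTop_nhds_zero_nat (𝕜 := ℝ)).const_mul 2
  filter_upwards [ContDiffBump.ae_convolution_tendsto_right_of_locallyIntegrable (μ := volume)
    (K := 2) hβ (.of_forall fun n => le_rfl) hw.1] with k hk
  refine le_of_tendsto hk.norm (.of_forall fun n => ?_)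
  rw [convolution_eq_swap]
  refine le_of_eq_of_le ?_ (key (fun x => (β n).normed volume (k - x)) ?_ ?_ ?_ ?_)
  · simp
  · exact (β n).contDiff_normed.comp (contDiff_const.sub contDiff_id)
  · exact (β n).hasCompactSupport_normed.comp_homeomorph (Homeomorph.subLeft k)
  · exact fun x => (β n).nonneg_normed _
  · rw [integral_sub_left_eq_self (fun x => (β n).normed volume x) volume k]
    exact (β n).integral_normed

theorem exp_neg_mul_sq_le {a : ℝ} (ha : 0 < a) (k : ℝ) :
    exp (-(a * k ^ 2)) ≤ exp (-(a / 2) * k ^ 2) :=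
  exp_le_exp.2 (by nlinarith [mul_nonneg ha.le (sq_nonneg k)])

theorem sqrt_mul_abs_mul_exp_neg_mul_sq_le {a : ℝ} (ha : 0 < a) (k : ℝ) :
    √a * |k| * exp (-(a * k ^ 2)) ≤ exp (-(a / 2) * k ^ 2) := by
  have h : √a * |k| ≤ exp (a / 2 * k ^ 2) := by
    have h2 : a * k ^ 2 = (√a * |k|) ^ 2 := by rw [mul_pow, sq_sqrt ha.le, sq_abs]
    nlinarith [add_one_le_exp (a / 2 * k ^ 2), sq_nonneg (√a * |k| - 1)]
  calc √a * |k| * exp (-(a * k ^ 2))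
      ≤ exp (a / 2 * k ^ 2) * exp (-(a * k ^ 2)) := by gcongr
    _ = exp (-(a / 2) * k ^ 2) := by rw [← exp_add]; ring_nf

theorem mul_sq_mul_exp_neg_mul_sq_le (a k : ℝ) :
    a * k ^ 2 * exp (-(a * k ^ 2)) ≤ 2 * exp (-(a / 2) * k ^ 2) := by
  have h : a * k ^ 2 ≤ 2 * exp (a / 2 * k ^ 2) := by
    linarith [add_one_le_exp (a / 2 * k ^ 2)]
  calc a * k ^ 2 * exp (-(a * k ^ 2))
      ≤ 2 * exp (a / 2 * k ^ 2) * exp (-(a * k ^ 2)) := by gcongr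
    _ = 2 * exp (-(a / 2) * k ^ 2) := by rw [mul_assoc, ← exp_add]; ring_nf

theorem norm_deriv_heat_le {d t : ℝ} (hd : 0 < d) (ht : 0 ≤ t) (k : ℝ) (z z' : ℂ) :
    ‖Complex.ofReal (-(2 * d * k * t)) * Complex.ofReal (exp (-(d * k ^ 2 * t))) * z
        + Complex.ofReal (exp (-(d * k ^ 2 * t))) * z'‖ ≤
      2 * (d * t) * |k| * exp (-(d * t * k ^ 2)) * ‖z‖ + exp (-(d * t * k ^ 2)) * ‖z'‖ := by
  refine (norm_add_le _ _).trans (le_of_eq ?_)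
  simp only [norm_mul, Complex.norm_real, norm_eq_abs, abs_neg, abs_mul, abs_exp, abs_two,
    abs_of_pos hd, abs_of_nonneg ht]
  ring_nf

theorem norm_heat_eq (d t k : ℝ) (z : ℂ) :
    ‖Complex.ofReal (exp (-(d * k ^ 2 * t))) * z‖ = exp (-(d * t * k ^ 2)) * ‖z‖ := by
  rw [norm_mul, Complex.norm_real, norm_eq_abs, abs_exp]
  ring_nf

/-- Pointwise bound by the weighted data, used for bounded times. -/
theorem heat_integrand_le_weight {d t : ℝ} (hd : 0 < d) (ht : 0 ≤ t) (ht1 : t ≤ 1) {j m : ℕ}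
    (hj : j ≤ 1) (k : ℝ) (z z' : ℂ) :
    |k| ^ j * ‖if m = 0 then Complex.ofReal (exp (-(d * k ^ 2 * t))) * z
        else Complex.ofReal (-(2 * d * k * t)) * Complex.ofReal (exp (-(d * k ^ 2 * t))) * z
          + Complex.ofReal (exp (-(d * k ^ 2 * t))) * z'‖ ≤
      (4 + 2 * d) * ((1 + |k|) * ‖z‖ + (1 + |k|) * ‖z'‖) := by
  have hk := abs_nonneg k
  have hE1 : exp (-(d * t * k ^ 2)) ≤ 1 := exp_le_one_iff.2 (by simp only [neg_nonpos]; positivity)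
  have hE0 := exp_nonneg (-(d * t * k ^ 2))
  have hE2 : d * t * k ^ 2 * exp (-(d * t * k ^ 2)) ≤ 2 :=
    (mul_sq_mul_exp_neg_mul_sq_le (d * t) k).trans
      (by
        have : exp (-(d * t / 2) * k ^ 2) ≤ 1 :=
          exp_le_one_iff.2 (by rw [neg_mul, neg_nonpos]; positivity)
        linarith)
  have hz := norm_nonneg z
  have hz' := norm_nonneg z'
  have hkj : |k| ^ j ≤ 1 + |k| := by
    interval_cases j
    · simp
    · simp
  split_ifs with hm
  · rw [norm_heat_eq]
    calc |k| ^ j * (exp (-(d * t * k ^ 2)) * ‖z‖) ≤ (1 + |k|) * (1 * ‖z‖) := by gcongr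
      _ ≤ _ := by nlinarith [mul_nonneg hk hz, mul_nonneg hk hz', mul_nonneg hd.le hz,
          mul_nonneg hd.le hz', mul_nonneg hd.le (mul_nonneg hk hz),
          mul_nonneg hd.le (mul_nonneg hk hz')]
  · refine (mul_le_mul_of_nonneg_left (norm_deriv_heat_le hd ht k z z') (by positivity)).trans ?_
    rw [mul_add]
    have h1 : |k| ^ j * (exp (-(d * t * k ^ 2)) * ‖z'‖) ≤ (1 + |k|) * (1 * ‖z'‖) := by gcongr
    have h2 : |k| ^ j * (2 * (d * t) * |k| * exp (-(d * t * k ^ 2))) ≤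
        (4 + 2 * d) * (1 + |k|) := by
      interval_cases j
      · calc |k| ^ 0 * (2 * (d * t) * |k| * exp (-(d * t * k ^ 2)))
            ≤ 1 * (2 * (d * 1) * |k| * 1) := by rw [pow_zero]; gcongr
          _ ≤ _ := by nlinarith [mul_nonneg hd.le hk]
      · calc |k| ^ 1 * (2 * (d * t) * |k| * exp (-(d * t * k ^ 2)))
            = 2 * (d * t * k ^ 2 * exp (-(d * t * k ^ 2))) := by rw [← sq_abs k]; ring_nf
          _ ≤ _ := by nlinarith [mul_nonneg hd.le hk]
    have h3 := mul_le_mul_of_nonneg_right h2 hz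
    nlinarith [mul_nonneg hk hz', mul_nonneg hd.le hz', mul_nonneg hd.le (mul_nonneg hk hz')]

/-- Pointwise bound by a Gaussian and the derivative, used for large times. -/
theorem heat_integrand_le_gaussian {d t M : ℝ} (hd : 0 < d) (ht : 0 < t) {j m : ℕ}
    (hj : j ≤ 1) (hm : m ≤ 1) (k : ℝ) {z z' : ℂ} (hz : ‖z‖ ≤ M) :
    |k| ^ j * ‖if m = 0 then Complex.ofReal (exp (-(d * k ^ 2 * t))) * z
        else Complex.ofReal (-(2 * d * k * t)) * Complex.ofReal (exp (-(d * k ^ 2 * t))) * z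
          + Complex.ofReal (exp (-(d * k ^ 2 * t))) * z'‖ ≤
      (√(d * t))⁻¹ ^ (1 + j - m) *
        (4 * M * (√(d * t) * exp (-(d * t / 2) * k ^ 2)) + ‖z'‖) := by
  have ha : 0 < d * t := mul_pos hd ht
  have hs : 0 < √(d * t) := sqrt_pos.2 ha
  have hM : 0 ≤ M := (norm_nonneg z).trans hz
  have hk := abs_nonneg k
  have hz' := norm_nonneg z'
  have hE0 := exp_nonneg (-(d * t * k ^ 2))
  have hE1 : exp (-(d * t * k ^ 2)) ≤ 1 := exp_le_one_iff.2 (by rw [neg_nonpos]; positivity)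
  have g0 := exp_neg_mul_sq_le ha k
  have g1 := sqrt_mul_abs_mul_exp_neg_mul_sq_le ha k
  have g2 := mul_sq_mul_exp_neg_mul_sq_le (d * t) k
  have hss : √(d * t) * √(d * t) = d * t := mul_self_sqrt ha.le
  have hw1 : exp (-(d * t / 2) * k ^ 2) ≤ 1 :=
    exp_le_one_iff.2 (by rw [neg_mul, neg_nonpos]; positivity)
  have hnd := norm_deriv_heat_le hd ht.le k z z'
  have hw0 := exp_nonneg (-(d * t / 2) * k ^ 2)
  set s := √(d * t)
  set E := exp (-(d * t * k ^ 2)) with hE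
  set w := exp (-(d * t / 2) * k ^ 2)
  have hMw : 0 ≤ M * w := mul_nonneg hM hw0
  rw [inv_pow, ← div_eq_inv_mul, le_div_iff₀ (pow_pos hs _)]
  interval_cases m
  · rw [if_pos rfl, norm_heat_eq, ← hE]
    have e1 : E * ‖z‖ ≤ w * M := by gcongr
    have e2 : s * |k| * E * ‖z‖ ≤ w * M := by gcongr
    interval_cases j
    · norm_num
      nlinarith [mul_nonneg hs.le hMw]
    · norm_num
      nlinarith [mul_nonneg hs.le hMw]
  · rw [if_neg one_ne_zero]
    refine (mul_le_mul_of_nonneg_right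
      (mul_le_mul_of_nonneg_left hnd (by positivity)) (by positivity)).trans ?_
    rw [← hss] at g2 ⊢
    have e0 : E * ‖z'‖ ≤ 1 * ‖z'‖ := by gcongr
    have e1 : s * |k| * E * ‖z‖ ≤ w * M := by gcongr
    have e2 : s * |k| * E * ‖z'‖ ≤ 1 * ‖z'‖ := by
      gcongr
      exact g1.trans hw1
    have e3 : s * s * k ^ 2 * E * ‖z‖ ≤ 2 * w * M := by gcongr
    rw [← sq_abs k] at e3
    interval_cases j
    · norm_num
      nlinarith [mul_nonneg hs.le hMw, mul_le_mul_of_nonneg_left e1 hs.le]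
    · norm_num
      nlinarith [mul_nonneg hs.le hMw, mul_le_mul_of_nonneg_left e3 hs.le]

theorem integral_sqrt_mul_gaussian {a : ℝ} (ha : 0 < a) :
    ∫ k : ℝ, √a * exp (-(a / 2) * k ^ 2) = √(2 * π) := by
  rw [integral_const_mul, integral_gaussian, ← sqrt_mul ha.le]
  congr 1
  field_simp

theorem one_add_rpow_eq_pow {t : ℝ} (ht : 0 ≤ t) {j m : ℕ} (hm : m ≤ 1) :
    (1 + t) ^ (-(1 + (j : ℝ) - (m : ℝ)) / 2) = (√(1 + t))⁻¹ ^ (1 + j - m) := by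
  have h : 0 ≤ 1 + t := by linarith
  rw [sqrt_eq_rpow, ← rpow_neg h, ← rpow_natCast, ← rpow_mul h, Nat.cast_sub (by omega)]
  congr 1
  push_cast
  ring

/-- heat-semigroup `L¹`-estimates in Fourier space with weight `(1+|k|)`:
for `j, m ∈ {0,1}`,
`∫ |k^j ∂_k^m (e^{-dk²t} v₀(k))| dk ≤ C ‖v₀‖_{W^{1,1}_1} (1+t)^{-(1+j-m)/2}`. -/
theorem heat_semigroup_weighted_L1_estimate (d : ℝ) (hd : 0 < d) :
    ∃ C : ℝ, 1 ≤ C ∧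
      ∀ v₀ v₀' : ℝ → ℂ, HasWeakDeriv v₀ v₀' →
        Integrable (fun k => (1 + |k|) * ‖v₀ k‖) →
        Integrable (fun k => (1 + |k|) * ‖v₀' k‖) →
        ∀ t : ℝ, 0 ≤ t → ∀ j m : ℕ, j ≤ 1 → m ≤ 1 →
          (∫ k : ℝ, |k| ^ j *
              ‖if m = 0 then Complex.ofReal (Real.exp (-(d * k ^ 2 * t))) * v₀ k
                else Complex.ofReal (-(2 * d * k * t)) *
                      Complex.ofReal (Real.exp (-(d * k ^ 2 * t))) * v₀ k
                    + Complex.ofReal (Real.exp (-(d * k ^ 2 * t))) * v₀' k‖) ≤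
            C * ((∫ k : ℝ, (1 + |k|) * ‖v₀ k‖) + ∫ k : ℝ, (1 + |k|) * ‖v₀' k‖) *
              (1 + t) ^ (-(1 + (j : ℝ) - (m : ℝ)) / 2) := by
  obtain ⟨A, hA, hsob⟩ := exists_ae_norm_le_of_hasWeakDeriv
  set D : ℝ := 1 + √(2 / d) with hD
  have hD1 : 1 ≤ D := le_add_of_nonneg_right (sqrt_nonneg _)
  refine ⟨2 * (4 + 2 * d) + (4 * A * √(2 * π) + 1) * D ^ 2, ?_, ?_⟩
  · have : 0 ≤ (4 * A * √(2 * π) + 1) * D ^ 2 := by positivity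
    linarith
  intro v v' hw hv hv' t ht j m hj hm
  have le_weight : ∀ (u : ℝ → ℂ) (k : ℝ), ‖u k‖ ≤ (1 + |k|) * ‖u k‖ := fun u k =>
    le_mul_of_one_le_left (norm_nonneg _) (by linarith [abs_nonneg k])
  have hvi : Integrable v := hv.mono' hw.1.aestronglyMeasurable (.of_forall (le_weight v))
  have hvi' : Integrable v' := hv'.mono' hw.2.1.aestronglyMeasurable (.of_forall (le_weight v'))
  have n1 : ∫ k, ‖v k‖ ≤ ∫ k, (1 + |k|) * ‖v k‖ := integral_mono hvi.norm hv (le_weight v)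
  have n2 : ∫ k, ‖v' k‖ ≤ ∫ k, (1 + |k|) * ‖v' k‖ := integral_mono hvi'.norm hv' (le_weight v')
  have p1 : 0 ≤ ∫ k, ‖v k‖ := integral_nonneg fun _ => norm_nonneg _
  have p2 : 0 ≤ ∫ k, ‖v' k‖ := integral_nonneg fun _ => norm_nonneg _
  rw [one_add_rpow_eq_pow ht hm]
  set N := (∫ k : ℝ, (1 + |k|) * ‖v k‖) + ∫ k : ℝ, (1 + |k|) * ‖v' k‖ with hN
  have hN0 : 0 ≤ N := by linarith
  have hq : 1 + j - m ≤ 2 := by omega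
  have hσ : 0 < √(1 + t) := sqrt_pos.2 (by linarith)
  have hP : 0 ≤ (√(1 + t))⁻¹ ^ (1 + j - m) := by positivity
  rcases le_total t 1 with ht1 | ht1
  · have hP2 : 1 ≤ 2 * (√(1 + t))⁻¹ ^ (1 + j - m) := by
      have h1 : (√(1 + t))⁻¹ ^ 2 ≤ (√(1 + t))⁻¹ ^ (1 + j - m) :=
        pow_le_pow_of_le_one (by positivity)
          (inv_le_one_of_one_le₀ (one_le_sqrt.2 (by linarith))) hq
      rw [inv_pow, sq_sqrt (by linarith)] at h1
      have h2 : (2 : ℝ)⁻¹ ≤ (1 + t)⁻¹ := by gcongr; linarith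
      linarith
    calc _ ≤ ∫ k : ℝ, (4 + 2 * d) * ((1 + |k|) * ‖v k‖ + (1 + |k|) * ‖v' k‖) :=
          integral_mono_of_nonneg (.of_forall fun k => by positivity)
            ((hv.add hv').const_mul _)
            (.of_forall fun k => heat_integrand_le_weight hd ht ht1 hj k (v k) (v' k))
      _ = (4 + 2 * d) * N * 1 := by rw [integral_const_mul, integral_add hv hv', mul_one]
      _ ≤ (4 + 2 * d) * N * (2 * (√(1 + t))⁻¹ ^ (1 + j - m)) := by gcongr
      _ = 2 * (4 + 2 * d) * N * (√(1 + t))⁻¹ ^ (1 + j - m) := by ring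
      _ ≤ _ := by
          gcongr
          exact le_add_of_nonneg_right (by positivity)
  · have ht0 : 0 < t := by linarith
    have ha : 0 < d * t := mul_pos hd ht0
    have hr : (√(d * t))⁻¹ ^ (1 + j - m) ≤ D ^ 2 * (√(1 + t))⁻¹ ^ (1 + j - m) := by
      have h1 : (√(d * t))⁻¹ ≤ D * (√(1 + t))⁻¹ := by
        have h3 : √(1 + t) ≤ √(2 / d) * √(d * t) := by
          rw [← sqrt_mul (by positivity)]
          refine sqrt_le_sqrt ?_
          have : 2 / d * (d * t) = 2 * t := by field_simp
          linarith
        rw [← div_eq_mul_inv, le_div_iff₀ hσ, inv_mul_le_iff₀ (sqrt_pos.2 ha)]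
        nlinarith [sqrt_nonneg (d * t)]
      calc (√(d * t))⁻¹ ^ (1 + j - m) ≤ (D * (√(1 + t))⁻¹) ^ (1 + j - m) := by gcongr
        _ = D ^ (1 + j - m) * (√(1 + t))⁻¹ ^ (1 + j - m) := mul_pow _ _ _
        _ ≤ _ := by gcongr
    have hbound : ∀ᵐ k, ‖v k‖ ≤ A * N := by
      filter_upwards [hsob v v' hw hvi hvi'] with k hk
      refine hk.trans ?_
      gcongr
      linarith
    have hG : Integrable fun k : ℝ => √(d * t) * exp (-(d * t / 2) * k ^ 2) :=
      (integrable_exp_neg_mul_sq (half_pos ha)).const_mul _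
    calc _ ≤ ∫ k : ℝ, (√(d * t))⁻¹ ^ (1 + j - m) *
            (4 * (A * N) * (√(d * t) * exp (-(d * t / 2) * k ^ 2)) + ‖v' k‖) := by
          refine integral_mono_of_nonneg (.of_forall fun k => by positivity)
            (((hG.const_mul _).add hvi'.norm).const_mul _) ?_
          filter_upwards [hbound] with k hk
          exact heat_integrand_le_gaussian hd ht0 hj hm k hk
      _ = (√(d * t))⁻¹ ^ (1 + j - m) * (4 * (A * N) * √(2 * π) + ∫ k, ‖v' k‖) := by
          rw [integral_const_mul, integral_add (hG.const_mul _) hvi'.norm, integral_const_mul,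
            integral_sqrt_mul_gaussian ha]
      _ ≤ D ^ 2 * (√(1 + t))⁻¹ ^ (1 + j - m) * (4 * (A * N) * √(2 * π) + N) := by
          gcongr
          linarith
      _ = (4 * A * √(2 * π) + 1) * D ^ 2 * N * (√(1 + t))⁻¹ ^ (1 + j - m) := by ring
      _ ≤ _ := by
          gcongr
          exact le_add_of_nonneg_left (by positivity)
end
end

section
/- Let d > 0. There exists a constant C ≥ 1 such that for every v₀ ∈ W^{1,1}_1(ℝ,ℂ) and every t ≥ 0: (∫_ℝ |k e^{−d k² t} v₀(k)|² dk)^{1/2} ≤ C ‖v₀‖_{W^{1,1}_1} (1+t)^{−3/4}. -/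
open MeasureTheory Real

noncomputable section

open Filter Topology Set ContinuousLinearMap
open scoped Convolution ContDiff

/-- Differentiating a mollification amounts to mollifying the weak derivative. -/
lemma HasWeakDeriv.hasDerivAt_convolution {v v' : ℝ → ℂ} (h : HasWeakDeriv v v') {ρ : ℝ → ℝ}
    (hρ : ContDiff ℝ ∞ ρ) (hρc : HasCompactSupport ρ) (x : ℝ) :
    HasDerivAt (ρ ⋆[lsmul ℝ ℝ, volume] v) ((ρ ⋆[lsmul ℝ ℝ, volume] v') x) x := by
  have hderiv := hρc.hasDerivAt_convolution_left (lsmul ℝ ℝ) (hρ.of_le (by simp)) h.1 x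
  have hweak := h.2.2 (fun y => ρ (x - y)) (hρ.comp (contDiff_const.sub contDiff_id))
    (hρc.comp_homeomorph (Homeomorph.subLeft x))
  simp only [deriv_comp_const_sub, Complex.ofReal_neg, neg_mul, integral_neg, neg_inj] at hweak
  have heq : (deriv ρ ⋆[lsmul ℝ ℝ, volume] v) x = (ρ ⋆[lsmul ℝ ℝ, volume] v') x := by
    rw [convolution_lsmul_swap, convolution_lsmul_swap]
    simpa only [Complex.real_smul] using hweak
  rwa [heq] at hderiv

lemma integral_norm_convolution_le {ρ : ℝ → ℝ} {f : ℝ → ℂ} (hρ : Integrable ρ)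
    (hρ_nonneg : ∀ x, 0 ≤ ρ x) (hf : Integrable f) :
    ∫ x, ‖(ρ ⋆[lsmul ℝ ℝ, volume] f) x‖ ≤ (∫ x, ρ x) * ∫ x, ‖f x‖ := by
  have heq := integral_convolution (lsmul ℝ ℝ) hρ hf.norm
  rw [lsmul_apply, smul_eq_mul] at heq
  rw [← heq]
  refine integral_mono (hρ.integrable_convolution _ hf).norm
    (hρ.integrable_convolution _ hf.norm) fun x => ?_
  rw [convolution_lsmul, convolution_lsmul]
  refine (norm_integral_le_integral_norm _).trans_eq (integral_congr_ae ?_)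
  filter_upwards with y
  rw [norm_smul, Real.norm_of_nonneg (hρ_nonneg y), smul_eq_mul]

/-- An integrable differentiable function is bounded by the `L¹` norm of its derivative. -/
lemma norm_le_integral_norm_of_hasDerivAt {f f' : ℝ → ℂ} (hderiv : ∀ x, HasDerivAt f (f' x) x)
    (hf : Integrable f) (hf' : Integrable f') (x : ℝ) : ‖f x‖ ≤ ∫ y, ‖f' y‖ := by
  have hlim : Tendsto f atBot (𝓝 0) :=
    tendsto_zero_of_hasDerivAt_of_integrableOn_Iic (a := x) (fun y _ => hderiv y)
      hf'.integrableOn hf.integrableOn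
  have hint := integral_Iic_of_hasDerivAt_of_tendsto' (a := x) (fun y _ => hderiv y)
    hf'.integrableOn hlim
  rw [sub_zero] at hint
  rw [← hint]
  exact (norm_integral_le_integral_norm _).trans
    (setIntegral_le_integral hf'.norm (Eventually.of_forall fun y => norm_nonneg _))

/-- The embedding of `W^{1,1}(ℝ)` into `L^∞(ℝ)`. -/
lemma HasWeakDeriv.ae_norm_le {v v' : ℝ → ℂ} (h : HasWeakDeriv v v') (hv : Integrable v)
    (hv' : Integrable v') : ∀ᵐ x, ‖v x‖ ≤ ∫ y, ‖v' y‖ := by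
  let φ : ℕ → ContDiffBump (0 : ℝ) := fun n =>
    { rIn := 1 / ((n : ℝ) + 1)
      rOut := 2 * (1 / ((n : ℝ) + 1))
      rIn_pos := by positivity
      rIn_lt_rOut := lt_two_mul_self (by positivity) }
  have hrOut : Tendsto (fun n => (φ n).rOut) atTop (𝓝 0) := by
    simpa [φ] using (tendsto_one_div_add_atTop_nhds_zero_nat (𝕜 := ℝ)).const_mul 2
  filter_upwards [ContDiffBump.ae_convolution_tendsto_right_of_locallyIntegrable (K := 2) hrOut
    (Eventually.of_forall fun n => le_rfl) h.1] with x hx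
  refine le_of_tendsto hx.norm (Eventually.of_forall fun n => ?_)
  have hρ : Integrable ((φ n).normed volume) := (φ n).integrable_normed
  refine (norm_le_integral_norm_of_hasDerivAt
    (h.hasDerivAt_convolution (φ n).contDiff_normed (φ n).hasCompactSupport_normed)
    (hρ.integrable_convolution _ hv) (hρ.integrable_convolution _ hv') x).trans ?_
  have hle := integral_norm_convolution_le hρ (φ n).nonneg_normed hv'
  rwa [(φ n).integral_normed, one_mul] at hle

/-- The product rule for `k ↦ k * v k`. -/
lemma HasWeakDeriv.id_mul {v v' : ℝ → ℂ} (h : HasWeakDeriv v v') :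
    HasWeakDeriv (fun k => (k : ℂ) * v k) (fun k => v k + (k : ℂ) * v' k) := by
  obtain ⟨hv, hv', hweak⟩ := h
  have hmul : ∀ {w : ℝ → ℂ}, LocallyIntegrable w volume →
      LocallyIntegrable (fun k : ℝ => (k : ℂ) * w k) volume := fun {w} hw =>
    locallyIntegrableOn_univ.1
      ((locallyIntegrableOn_univ.2 hw).continuousOn_mul Complex.continuous_ofReal.continuousOn
        isOpen_univ.isLocallyClosed)
  refine ⟨hmul hv, hv.add (hmul hv'), fun φ hφ hφc => ?_⟩
  have hint : ∀ {w : ℝ → ℂ} {ψ : ℝ → ℝ}, LocallyIntegrable w volume → Continuous ψ →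
      HasCompactSupport ψ → Integrable fun k => (ψ k : ℂ) * w k := fun {w ψ} hw hψ hψc => by
    simpa only [Complex.real_smul] using
      hw.integrable_smul_left_of_hasCompactSupport hψ hψc
  have hφd : Continuous (deriv φ) := hφ.continuous_deriv (by simp)
  have hderiv : ∀ k, deriv (fun k => k * φ k) k = φ k + k * deriv φ k := fun k => by
    rw [deriv_fun_mul differentiableAt_fun_id (hφ.differentiable (by simp) k)]
    simp
  have key := hweak (fun k => k * φ k) (contDiff_id.mul hφ) hφc.mul_left
  simp only [hderiv] at key
  have hsplit : ∫ k, ((φ k + k * deriv φ k : ℝ) : ℂ) * v k =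
      (∫ k : ℝ, (φ k : ℂ) * v k) + ∫ k : ℝ, ((deriv φ k : ℝ) : ℂ) * ((k : ℂ) * v k) := by
    rw [← integral_add (hint hv hφ.continuous hφc) (hint (hmul hv) hφd hφc.deriv)]
    congr 1 with k
    push_cast
    ring
  have hright : ∫ k, ((k * φ k : ℝ) : ℂ) * v' k = ∫ k : ℝ, (φ k : ℂ) * ((k : ℂ) * v' k) := by
    congr 1 with k
    push_cast
    ring
  rw [hsplit, hright] at key
  simp only [mul_add]
  rw [integral_add (hint hv hφ.continuous hφc) (hint (hmul hv') hφ.continuous hφc), neg_add,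
    ← key]
  ring

lemma sq_mul_exp_neg_two_mul_le {b : ℝ} (hb : 0 < b) (k : ℝ) :
    k ^ 2 * exp (-(b * k ^ 2)) ^ 2 ≤ b⁻¹ * exp (-b * k ^ 2) := by
  have hle : b * k ^ 2 * exp (-(b * k ^ 2)) ≤ 1 := by
    rw [exp_neg, ← div_eq_mul_inv, div_le_one (exp_pos _)]
    linarith [add_one_le_exp (b * k ^ 2)]
  have heq : k ^ 2 * exp (-(b * k ^ 2)) ^ 2 =
      b⁻¹ * ((b * k ^ 2 * exp (-(b * k ^ 2))) * exp (-b * k ^ 2)) := by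
    rw [neg_mul]
    field_simp
  rw [heq]
  gcongr
  exact mul_le_of_le_one_left (exp_pos _).le hle

/-- The norm of `W^{1,1}_1` controls both `v` and `k ↦ k * v k` uniformly. -/
lemma HasWeakDeriv.ae_norm_le_weighted {v v' : ℝ → ℂ} (h : HasWeakDeriv v v')
    (hv : Integrable (fun k => (1 + |k|) * ‖v k‖))
    (hv' : Integrable (fun k => (1 + |k|) * ‖v' k‖)) :
    ∀ᵐ k, ‖v k‖ ≤ (∫ k, (1 + |k|) * ‖v k‖) + ∫ k, (1 + |k|) * ‖v' k‖ ∧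
      |k| * ‖v k‖ ≤ (∫ k, (1 + |k|) * ‖v k‖) + ∫ k, (1 + |k|) * ‖v' k‖ := by
  have hle : ∀ (w : ℝ → ℂ) k, ‖w k‖ ≤ (1 + |k|) * ‖w k‖ := fun w k =>
    le_mul_of_one_le_left (norm_nonneg _) (by linarith [abs_nonneg k])
  have hle_mul : ∀ (w : ℝ → ℂ) (k : ℝ), ‖(k : ℂ) * w k‖ ≤ (1 + |k|) * ‖w k‖ := fun w k => by
    rw [norm_mul, Complex.norm_real, Real.norm_eq_abs]
    gcongr
    linarith
  have hint : ∀ {w : ℝ → ℂ}, LocallyIntegrable w volume →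
      Integrable (fun k => (1 + |k|) * ‖w k‖) →
      Integrable w ∧ Integrable fun k : ℝ => (k : ℂ) * w k := fun {w} hw hwi =>
    ⟨hwi.mono' hw.aestronglyMeasurable (Eventually.of_forall (hle w)),
      hwi.mono' (Complex.continuous_ofReal.aestronglyMeasurable.mul hw.aestronglyMeasurable)
        (Eventually.of_forall (hle_mul w))⟩
  obtain ⟨hvi, hkvi⟩ := hint h.1 hv
  obtain ⟨hvi', hkvi'⟩ := hint h.2.1 hv'
  have hnonneg : 0 ≤ ∫ k, (1 + |k|) * ‖v k‖ := integral_nonneg fun k => by positivity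
  have hA : ∫ k, ‖v' k‖ ≤ ∫ k, (1 + |k|) * ‖v' k‖ := integral_mono hvi'.norm hv' (hle v')
  have hB : ∫ k, ‖v k + (k : ℂ) * v' k‖ ≤
      (∫ k, (1 + |k|) * ‖v k‖) + ∫ k, (1 + |k|) * ‖v' k‖ := by
    rw [← integral_add hv hv']
    exact integral_mono (hvi.add hkvi').norm (hv.add hv') fun k =>
      (norm_add_le _ _).trans (add_le_add (hle v k) (hle_mul v' k))
  filter_upwards [h.ae_norm_le hvi hvi', h.id_mul.ae_norm_le hkvi (hvi.add hkvi')] with k h₁ h₂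
  rw [norm_mul, Complex.norm_real, Real.norm_eq_abs] at h₂
  exact ⟨by linarith, h₂.trans hB⟩

/-- heat-semigroup weighted `L²`-estimate in Fourier space:
`(∫ |k e^{-dk²t} v₀(k)|² dk)^{1/2} ≤ C ‖v₀‖_{W^{1,1}_1} (1+t)^{-3/4}`. -/
theorem heat_semigroup_weighted_L2_estimate (d : ℝ) (hd : 0 < d) :
    ∃ C : ℝ, 1 ≤ C ∧
      ∀ v₀ v₀' : ℝ → ℂ, HasWeakDeriv v₀ v₀' →
        Integrable (fun k => (1 + |k|) * ‖v₀ k‖) →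
        Integrable (fun k => (1 + |k|) * ‖v₀' k‖) →
        ∀ t : ℝ, 0 ≤ t →
          Real.sqrt (∫ k : ℝ,
              ‖Complex.ofReal k * Complex.ofReal (Real.exp (-(d * k ^ 2 * t))) * v₀ k‖ ^ 2) ≤
            C * ((∫ k : ℝ, (1 + |k|) * ‖v₀ k‖) + ∫ k : ℝ, (1 + |k|) * ‖v₀' k‖) *
              (1 + t) ^ (-(3 : ℝ) / 4) := by
  set K : ℝ := 2 ^ (3 / 2 : ℝ) * (1 + d⁻¹ * √(π / d)) with hK
  have hone : (1 : ℝ) ≤ 2 ^ (3 / 2 : ℝ) := one_le_rpow (by norm_num) (by norm_num)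
  have hK_nonneg : 0 ≤ K := by positivity
  refine ⟨√K, one_le_sqrt.2 (one_le_mul_of_one_le_of_one_le hone ?_),
    fun v v' h hv hv' t ht => ?_⟩
  · linarith [show 0 ≤ d⁻¹ * √(π / d) by positivity]
  have hbound := h.ae_norm_le_weighted hv hv'
  have hM'_nonneg : 0 ≤ ∫ k, (1 + |k|) * ‖v' k‖ := integral_nonneg fun k => by positivity
  have hM_nonneg : 0 ≤ (∫ k, (1 + |k|) * ‖v k‖) + ∫ k, (1 + |k|) * ‖v' k‖ :=
    add_nonneg (integral_nonneg fun k => by positivity) hM'_nonneg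
  have hM_ge : ∫ k, (1 + |k|) * ‖v k‖ ≤
      (∫ k, (1 + |k|) * ‖v k‖) + ∫ k, (1 + |k|) * ‖v' k‖ := by linarith
  set M : ℝ := (∫ k, (1 + |k|) * ‖v k‖) + ∫ k, (1 + |k|) * ‖v' k‖
  have hnorm : ∀ k : ℝ,
      ‖Complex.ofReal k * Complex.ofReal (exp (-(d * k ^ 2 * t))) * v k‖ ^ 2 =
        k ^ 2 * exp (-(d * t * k ^ 2)) ^ 2 * ‖v k‖ ^ 2 := fun k => by
    rw [norm_mul, norm_mul, Complex.norm_real, Complex.norm_real, Real.norm_eq_abs,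
      Real.norm_eq_abs, abs_exp, mul_pow, mul_pow, sq_abs, mul_right_comm d]
  simp only [hnorm]
  suffices hI : ∫ k, k ^ 2 * exp (-(d * t * k ^ 2)) ^ 2 * ‖v k‖ ^ 2 ≤
      K * M ^ 2 * (1 + t) ^ (-(3 / 2) : ℝ) by
    refine sqrt_le_iff.2 ⟨by positivity, hI.trans_eq ?_⟩
    rw [mul_pow, mul_pow, sq_sqrt hK_nonneg, ← rpow_mul_natCast (by positivity)]
    norm_num
  have hnonneg : 0 ≤ᵐ[volume] fun k => k ^ 2 * exp (-(d * t * k ^ 2)) ^ 2 * ‖v k‖ ^ 2 :=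
    Eventually.of_forall fun k => by positivity
  rcases le_total t 1 with ht1 | ht1
  · have hI : ∫ k, k ^ 2 * exp (-(d * t * k ^ 2)) ^ 2 * ‖v k‖ ^ 2 ≤
        ∫ k, M * ((1 + |k|) * ‖v k‖) := by
      refine integral_mono_of_nonneg hnonneg (hv.const_mul M) ?_
      filter_upwards [hbound] with k hk
      have hexp : exp (-(d * t * k ^ 2)) ^ 2 ≤ 1 :=
        pow_le_one₀ (exp_pos _).le (exp_le_one_iff.2 (neg_nonpos.2 (by positivity)))
      calc k ^ 2 * exp (-(d * t * k ^ 2)) ^ 2 * ‖v k‖ ^ 2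
          ≤ k ^ 2 * 1 * ‖v k‖ ^ 2 := by gcongr
        _ = (|k| * ‖v k‖) * (|k| * ‖v k‖) := by rw [← sq_abs]; ring
        _ ≤ M * ((1 + |k|) * ‖v k‖) := by
            gcongr
            · exact hk.2
            · linarith
    rw [integral_const_mul] at hI
    have hKt : 1 ≤ K * (1 + t) ^ (-(3 / 2) : ℝ) := by
      rw [rpow_neg (by positivity), ← div_eq_mul_inv, one_le_div (by positivity)]
      calc (1 + t) ^ (3 / 2 : ℝ) ≤ 2 ^ (3 / 2 : ℝ) := by
            gcongr
            linarith
        _ ≤ K := le_mul_of_one_le_right (by positivity)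
            (by linarith [show 0 ≤ d⁻¹ * √(π / d) by positivity])
    calc _ ≤ M * M := hI.trans (by gcongr)
      _ ≤ (M * M) * (K * (1 + t) ^ (-(3 / 2) : ℝ)) :=
          le_mul_of_one_le_right (by positivity) hKt
      _ = _ := by ring
  · have ht0 : 0 < t := by linarith
    have hI : ∫ k, k ^ 2 * exp (-(d * t * k ^ 2)) ^ 2 * ‖v k‖ ^ 2 ≤
        ∫ k, M ^ 2 * (d * t)⁻¹ * exp (-(d * t) * k ^ 2) := by
      refine integral_mono_of_nonneg hnonneg
        ((integrable_exp_neg_mul_sq (by positivity)).const_mul _) ?_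
      filter_upwards [hbound] with k hk
      calc k ^ 2 * exp (-(d * t * k ^ 2)) ^ 2 * ‖v k‖ ^ 2
          ≤ ((d * t)⁻¹ * exp (-(d * t) * k ^ 2)) * M ^ 2 :=
            mul_le_mul (sq_mul_exp_neg_two_mul_le (by positivity) k)
              (pow_le_pow_left₀ (norm_nonneg _) hk.1 2) (by positivity) (by positivity)
        _ = _ := by ring
    rw [integral_const_mul, integral_gaussian] at hI
    have hpow : (d * t)⁻¹ * √(π / (d * t)) = d⁻¹ * √(π / d) * t ^ (-(3 / 2) : ℝ) := by
      rw [← div_div, sqrt_div (by positivity), sqrt_eq_rpow t, rpow_neg ht0.le,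
        show (3 / 2 : ℝ) = 1 + 1 / 2 by norm_num, rpow_add ht0, rpow_one]
      field_simp
    have ht_le : t ^ (-(3 / 2) : ℝ) ≤ 2 ^ (3 / 2 : ℝ) * (1 + t) ^ (-(3 / 2) : ℝ) := by
      rw [rpow_neg ht0.le, rpow_neg (by positivity), ← div_eq_mul_inv,
        ← div_rpow (by positivity) (by positivity), ← inv_rpow ht0.le]
      gcongr
      rw [inv_eq_one_div, div_le_div_iff₀ ht0 (by positivity)]
      linarith
    calc _ ≤ M ^ 2 * ((d * t)⁻¹ * √(π / (d * t))) := by rwa [← mul_assoc]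
      _ = M ^ 2 * (d⁻¹ * √(π / d) * t ^ (-(3 / 2) : ℝ)) := by rw [hpow]
      _ ≤ M ^ 2 * ((1 + d⁻¹ * √(π / d)) *
            (2 ^ (3 / 2 : ℝ) * (1 + t) ^ (-(3 / 2) : ℝ))) := by
          gcongr
          linarith
      _ = _ := by rw [hK]; ring
end
end

section
/- Let d > 0 and c ∈ ℝ. There exists a constant C ≥ 1, depending only on d and c, such that for every v₀ ∈ W^{1,1}_1(ℝ,ℂ), every t ≥ 0 and j ∈ {0,1}: ∫_ℝ (1+|k|) |∂_k^j ( e^{(−k² d + i c k) t} v₀(k) )| dk ≤ C (1+t) ‖v₀‖_{W^{1,1}_1}, where for j = 1 the derivative is taken in the weak sense. -/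
open MeasureTheory Real

noncomputable section

/-- `e^{x + iy}` for real `x, y`. -/
def expc (x y : ℝ) : ℂ := Complex.exp (Complex.ofReal x + Complex.ofReal y * Complex.I)

/-- The modulus of `e^{x + iy}` is `e^x`. -/
theorem norm_expc (x y : ℝ) : ‖expc x y‖ = Real.exp x := by
  simp [expc, Complex.norm_exp]

/-- The Gaussian absorbs the linear growth of the derivative of its phase. -/
theorem two_mul_abs_mul_exp_neg_sq_le (a k : ℝ) (ha : 0 ≤ a) :
    2 * |k| * a * Real.exp (-(k ^ 2 * a)) ≤ 1 + a := by
  have hsq : 2 * |k| * a ≤ a + k ^ 2 * a := by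
    nlinarith [mul_nonneg ha (sq_nonneg (|k| - 1)), sq_abs k]
  have hexp : k ^ 2 * a ≤ Real.exp (k ^ 2 * a) := by
    linarith [Real.add_one_le_exp (k ^ 2 * a)]
  have hle : Real.exp (-(k ^ 2 * a)) ≤ 1 :=
    Real.exp_le_one_iff.mpr (neg_nonpos.mpr (by positivity))
  have hinv : Real.exp (k ^ 2 * a) * Real.exp (-(k ^ 2 * a)) = 1 := by
    rw [← Real.exp_add, add_neg_cancel, Real.exp_zero]
  calc 2 * |k| * a * Real.exp (-(k ^ 2 * a))
      ≤ (a + Real.exp (k ^ 2 * a)) * Real.exp (-(k ^ 2 * a)) := by gcongr; linarith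
    _ = a * Real.exp (-(k ^ 2 * a)) + 1 := by rw [add_mul, hinv]
    _ ≤ 1 + a := by linarith [mul_le_mul_of_nonneg_left hle ha]

/-- The derivative of `e^{(-k²d + ick)t}` in `k` grows at most linearly in `t`, uniformly in `k`. -/
theorem norm_deriv_symbol_le (d c t k : ℝ) (hd : 0 < d) (ht : 0 ≤ t) :
    ‖(Complex.ofReal (-(2 * k * d * t)) + Complex.ofReal (c * t) * Complex.I) *
      expc (-(k ^ 2 * d * t)) (c * k * t)‖ ≤ 1 + d * t + |c| * t := by
  have hdt : 0 ≤ d * t := by positivity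
  have hle : Real.exp (-(k ^ 2 * d * t)) ≤ 1 :=
    Real.exp_le_one_iff.mpr (neg_nonpos.mpr (by positivity))
  have hnorm : ‖Complex.ofReal (-(2 * k * d * t)) + Complex.ofReal (c * t) * Complex.I‖ ≤
      2 * |k| * (d * t) + |c| * t := by
    refine (norm_add_le _ _).trans_eq ?_
    rw [norm_mul, Complex.norm_I, mul_one, Complex.norm_real, Complex.norm_real,
      Real.norm_eq_abs, Real.norm_eq_abs, abs_neg, abs_mul, abs_mul, abs_mul, abs_mul,
      abs_of_pos hd, abs_of_nonneg ht, abs_two]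
    ring
  have hgauss := two_mul_abs_mul_exp_neg_sq_le (d * t) k hdt
  rw [← mul_assoc (k ^ 2)] at hgauss
  rw [norm_mul, norm_expc]
  calc _ ≤ (2 * |k| * (d * t) + |c| * t) * Real.exp (-(k ^ 2 * d * t)) := by gcongr
    _ ≤ 1 + d * t + |c| * t := by
      rw [add_mul]
      linarith [mul_le_mul_of_nonneg_left hle (mul_nonneg (abs_nonneg c) ht)]

/-- for the advection-diffusion semigroup `e^{(-k²d + ick)t}` and `j ∈ {0,1}`,
`∫ (1+|k|) |∂_k^j (e^{(-k²d+ick)t} v₀(k))| dk ≤ C (1+t) ‖v₀‖_{W^{1,1}_1}`. -/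
theorem advection_diffusion_semigroup_weighted_estimate (d c : ℝ) (hd : 0 < d) :
    ∃ C : ℝ, 1 ≤ C ∧
      ∀ v₀ v₀' : ℝ → ℂ, HasWeakDeriv v₀ v₀' →
        Integrable (fun k => (1 + |k|) * ‖v₀ k‖) →
        Integrable (fun k => (1 + |k|) * ‖v₀' k‖) →
        ∀ t : ℝ, 0 ≤ t → ∀ j : ℕ, j ≤ 1 →
          (∫ k : ℝ, (1 + |k|) *
              ‖if j = 0 then expc (-(k ^ 2 * d * t)) (c * k * t) * v₀ k
                else (Complex.ofReal (-(2 * k * d * t)) + Complex.ofReal (c * t) * Complex.I) *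
                      expc (-(k ^ 2 * d * t)) (c * k * t) * v₀ k
                    + expc (-(k ^ 2 * d * t)) (c * k * t) * v₀' k‖) ≤
            C * (1 + t) * ((∫ k : ℝ, (1 + |k|) * ‖v₀ k‖) + ∫ k : ℝ, (1 + |k|) * ‖v₀' k‖) := by
  refine ⟨1 + d + |c|, by linarith [abs_nonneg c], ?_⟩
  intro v₀ v₀' _ hv hv' t ht j _
  have hc : 0 ≤ |c| := abs_nonneg c
  have hK : 1 + d * t + |c| * t ≤ (1 + d + |c|) * (1 + t) := by nlinarith
  have hK1 : 1 ≤ (1 + d + |c|) * (1 + t) := by nlinarith [mul_nonneg hd.le ht, mul_nonneg hc ht]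
  generalize (1 + d + |c|) * (1 + t) = K at hK hK1 ⊢
  rw [← integral_add hv hv', ← integral_const_mul]
  refine integral_mono_of_nonneg (.of_forall fun k => by positivity)
    ((hv.add hv').const_mul K) (.of_forall fun k => ?_)
  have hexp : ‖expc (-(k ^ 2 * d * t)) (c * k * t)‖ ≤ 1 := by
    rw [norm_expc]
    exact Real.exp_le_one_iff.mpr (neg_nonpos.mpr (by positivity))
  have hmul (w : ℂ) : ‖expc (-(k ^ 2 * d * t)) (c * k * t) * w‖ ≤ K * ‖w‖ := by
    rw [norm_mul]
    gcongr
    exact hexp.trans hK1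
  have hbound : ‖if j = 0 then expc (-(k ^ 2 * d * t)) (c * k * t) * v₀ k
      else (Complex.ofReal (-(2 * k * d * t)) + Complex.ofReal (c * t) * Complex.I) *
          expc (-(k ^ 2 * d * t)) (c * k * t) * v₀ k
        + expc (-(k ^ 2 * d * t)) (c * k * t) * v₀' k‖ ≤ K * ‖v₀ k‖ + K * ‖v₀' k‖ := by
    split_ifs
    · exact (hmul _).trans (le_add_of_nonneg_right (by positivity))
    · refine (norm_add_le _ _).trans (add_le_add ?_ (hmul _))
      rw [norm_mul]
      gcongr
      exact (norm_deriv_symbol_le d c t k hd ht).trans hK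
  calc _ ≤ (1 + |k|) * (K * ‖v₀ k‖ + K * ‖v₀' k‖) :=
        mul_le_mul_of_nonneg_left hbound (by positivity)
    _ = K * ((1 + |k|) * ‖v₀ k‖ + (1 + |k|) * ‖v₀' k‖) := by ring
end
end

section
/- Let a ∈ [0,1) and b ≥ 0 with a + b ≥ 1 and b ≠ 1. Then there exists a constant C ≥ 1, depending only on a and b, such that for all t > 0: ∫_0^t (t−s)^{−a} (1+s)^{−b} ds ≤ C (1+t)^{−min(a, a+b−1)}. -/
open MeasureTheory Real

noncomputable section

lemma rpow_neg_le_two_mul_rpow_neg {m x y : ℝ} (hm0 : 0 ≤ m) (hm1 : m ≤ 1) (hx : 0 < x)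
    (hy : 0 < y) (hyx : y ≤ 2 * x) : x ^ (-m) ≤ 2 * y ^ (-m) := by
  have e : (2 * x) ^ (-m) ≤ y ^ (-m) := rpow_le_rpow_of_nonpos hy hyx (by linarith)
  rw [mul_rpow (by norm_num) hx.le] at e
  have e2 : (2 : ℝ) ^ m ≤ 2 := by
    simpa using rpow_le_rpow_of_exponent_le (x := 2) (by norm_num) hm1
  have e3 : (2 : ℝ) ^ m * 2 ^ (-m) = 1 := by
    rw [← rpow_add (by norm_num)]; simp
  calc x ^ (-m) = 2 ^ m * (2 ^ (-m) * x ^ (-m)) := by rw [← mul_assoc, e3, one_mul]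
    _ ≤ 2 * y ^ (-m) := mul_le_mul e2 e (by positivity) (by norm_num)

/-- A bound on `∫_0^h (1+s)^{-b} ds`, away from the logarithmic exponent `b = 1`. -/
lemma integral_one_add_rpow_neg_le {b h : ℝ} (hb1 : b ≠ 1) (hh : 0 < h) :
    ∫ s in (0 : ℝ)..h, (1 + s) ^ (-b) ≤ |1 - b|⁻¹ * (1 + h) ^ max 0 (1 - b) := by
  have hI : ∫ s in (0 : ℝ)..h, (1 + s) ^ (-b) = ((1 + h) ^ (1 - b) - 1) / (1 - b) := by
    rw [intervalIntegral.integral_comp_add_left (fun x : ℝ => x ^ (-b)) 1, integral_rpow]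
    · simp [neg_add_eq_sub]
    · refine Or.inr ⟨fun h' => hb1 (by linarith), ?_⟩
      rw [Set.uIcc_of_le (by linarith)]
      intro hx
      linarith [hx.1]
  have hpos : 0 < (1 + h) ^ (1 - b) := rpow_pos_of_pos (by linarith) _
  rw [hI, ← div_eq_inv_mul]
  rcases lt_or_gt_of_ne hb1 with hb | hb
  · rw [abs_of_pos (by linarith), max_eq_right (by linarith)]
    exact div_le_div_of_nonneg_right (by linarith) (by linarith)
  · rw [abs_of_neg (by linarith), max_eq_left (by linarith), rpow_zero, ← neg_div_neg_eq]
    exact div_le_div_of_nonneg_right (by linarith) (by linarith)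

lemma intervalIntegrable_one_add_rpow_neg (b : ℝ) {x y : ℝ} (hx : 0 ≤ x) (hxy : x ≤ y) :
    IntervalIntegrable (fun s : ℝ => (1 + s) ^ (-b)) volume x y := by
  refine ContinuousOn.intervalIntegrable_of_Icc hxy fun s hs => ContinuousAt.continuousWithinAt ?_
  have : 1 + s ≠ 0 := by linarith [hs.1]
  exact (continuousAt_const.add continuousAt_id).rpow_const (Or.inl this)

lemma intervalIntegrable_sub_rpow_neg {a : ℝ} (ha1 : a < 1) (t x y : ℝ) :
    IntervalIntegrable (fun s : ℝ => (t - s) ^ (-a)) volume x y := by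
  have h := (intervalIntegral.intervalIntegrable_rpow' (a := t - x) (b := t - y)
    (r := -a) (by linarith)).comp_sub_left t
  simpa using h

lemma intervalIntegrable_sub_rpow_mul_one_add_rpow {a : ℝ} (ha1 : a < 1) (b t : ℝ) {x y : ℝ}
    (hx : 0 ≤ x) (hxy : x ≤ y) :
    IntervalIntegrable (fun s : ℝ => (t - s) ^ (-a) * (1 + s) ^ (-b)) volume x y := by
  refine (intervalIntegrable_sub_rpow_neg ha1 t x y).mul_continuousOn ?_
  rw [Set.uIcc_of_le hxy]
  intro s hs
  have : 1 + s ≠ 0 := by linarith [hs.1]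
  exact ((continuousAt_const.add continuousAt_id).rpow_const (Or.inl this)).continuousWithinAt

/-- On the first half of the interval the singular factor is comparable to its value at `h`. -/
lemma integral_convolution_left_half_le {a b h : ℝ} (ha0 : 0 ≤ a) (ha1 : a < 1) (hb0 : 0 ≤ b)
    (hb1 : b ≠ 1) (hh : 0 < h) :
    ∫ s in (0 : ℝ)..h, (2 * h - s) ^ (-a) * (1 + s) ^ (-b) ≤
      2 * (1 + |1 - b|⁻¹) * (1 + h) ^ (max 0 (1 - b) - a) := by
  set K := |1 - b|⁻¹
  set c := max 0 (1 - b)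
  have hK : 0 ≤ K := inv_nonneg.2 (abs_nonneg _)
  have hc : 0 ≤ c := le_max_left _ _
  have hint := intervalIntegrable_one_add_rpow_neg b le_rfl hh.le
  have hfac : ∫ s in (0 : ℝ)..h, (2 * h - s) ^ (-a) * (1 + s) ^ (-b) ≤
      h ^ (-a) * ∫ s in (0 : ℝ)..h, (1 + s) ^ (-b) := by
    rw [← intervalIntegral.integral_const_mul]
    refine intervalIntegral.integral_mono_on hh.le
      (intervalIntegrable_sub_rpow_mul_one_add_rpow ha1 b _ le_rfl hh.le)
      (hint.const_mul _) fun s hs => ?_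
    exact mul_le_mul_of_nonneg_right
      (rpow_le_rpow_of_nonpos hh (by linarith [hs.2]) (by linarith))
      (rpow_nonneg (by linarith [hs.1]) _)
  have hha : 0 ≤ h ^ (-a) := rpow_nonneg hh.le _
  have hP : 0 ≤ (1 + h) ^ (c - a) := rpow_nonneg (by linarith) _
  refine hfac.trans ?_
  rcases le_total h 1 with h1 | h1
  · have hI : ∫ s in (0 : ℝ)..h, (1 + s) ^ (-b) ≤ h := by
      calc ∫ s in (0 : ℝ)..h, (1 + s) ^ (-b) ≤ ∫ _ in (0 : ℝ)..h, (1 : ℝ) :=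
            intervalIntegral.integral_mono_on hh.le hint (by simp) fun s hs =>
              rpow_le_one_of_one_le_of_nonpos (by linarith [hs.1]) (by linarith)
        _ = h := by simp
    have hle : h ^ (-a) * h ≤ 1 := by
      rw [← rpow_add_one hh.ne']
      exact rpow_le_one hh.le h1 (by linarith)
    have hlow : 1 ≤ 2 * (1 + h) ^ (c - a) := by
      have e1 : (1 + h) ^ (-a) ≤ (1 + h) ^ (c - a) :=
        rpow_le_rpow_of_exponent_le (by linarith) (by linarith)
      have e2 := rpow_neg_le_two_mul_rpow_neg (x := 1) (y := 1 + h) ha0 ha1.le one_pos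
        (by linarith) (by linarith)
      rw [one_rpow] at e2
      linarith
    have := mul_le_mul_of_nonneg_left hI hha
    nlinarith [mul_nonneg hK hP]
  · have e1 : h ^ (-a) ≤ 2 * (1 + h) ^ (-a) :=
      rpow_neg_le_two_mul_rpow_neg ha0 ha1.le hh (by linarith) (by linarith)
    have hKc : 0 ≤ K * (1 + h) ^ c := mul_nonneg hK (rpow_nonneg (by linarith) _)
    calc h ^ (-a) * ∫ s in (0 : ℝ)..h, (1 + s) ^ (-b)
        ≤ h ^ (-a) * (K * (1 + h) ^ c) :=
          mul_le_mul_of_nonneg_left (integral_one_add_rpow_neg_le hb1 hh) hha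
      _ ≤ 2 * (1 + h) ^ (-a) * (K * (1 + h) ^ c) := mul_le_mul_of_nonneg_right e1 hKc
      _ = 2 * K * (1 + h) ^ (c - a) := by
          rw [sub_eq_add_neg, rpow_add (by linarith)]; ring
      _ ≤ 2 * (1 + K) * (1 + h) ^ (c - a) := by nlinarith

/-- On the second half of the interval the decaying factor is comparable to its value at `h`. -/
lemma integral_convolution_right_half_le {a b h : ℝ} (ha1 : a < 1) (hb0 : 0 ≤ b) (hh : 0 < h) :
    ∫ s in h..(2 * h), (2 * h - s) ^ (-a) * (1 + s) ^ (-b) ≤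
      (1 - a)⁻¹ * (1 + h) ^ (max 0 (1 - b) - a) := by
  have hfac : ∫ s in h..(2 * h), (2 * h - s) ^ (-a) * (1 + s) ^ (-b) ≤
      (∫ s in h..(2 * h), (2 * h - s) ^ (-a)) * (1 + h) ^ (-b) := by
    rw [← intervalIntegral.integral_mul_const]
    refine intervalIntegral.integral_mono_on (by linarith)
      (intervalIntegrable_sub_rpow_mul_one_add_rpow ha1 b _ hh.le (by linarith))
      ((intervalIntegrable_sub_rpow_neg ha1 _ _ _).mul_const _) fun s hs => ?_
    exact mul_le_mul_of_nonneg_left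
      (rpow_le_rpow_of_nonpos (by linarith) (by linarith [hs.1]) (by linarith))
      (rpow_nonneg (by linarith [hs.2]) _)
  have hI : ∫ s in h..(2 * h), (2 * h - s) ^ (-a) = (1 - a)⁻¹ * h ^ (1 - a) := by
    rw [intervalIntegral.integral_comp_sub_left (fun x : ℝ => x ^ (-a)) (2 * h),
      integral_rpow (Or.inl (by linarith)), sub_self, neg_add_eq_sub,
      zero_rpow (by linarith), show 2 * h - h = h by ring]
    ring
  have ha : 0 ≤ (1 - a)⁻¹ := inv_nonneg.2 (by linarith)
  refine hfac.trans ?_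
  rw [hI, mul_assoc]
  refine mul_le_mul_of_nonneg_left ?_ ha
  calc h ^ (1 - a) * (1 + h) ^ (-b) ≤ (1 + h) ^ (1 - a) * (1 + h) ^ (-b) :=
        mul_le_mul_of_nonneg_right (rpow_le_rpow hh.le (by linarith) (by linarith))
          (rpow_nonneg (by linarith) _)
    _ = (1 + h) ^ (1 - a + -b) := (rpow_add (by linarith) _ _).symm
    _ ≤ (1 + h) ^ (max 0 (1 - b) - a) :=
        rpow_le_rpow_of_exponent_le (by linarith) (by linarith [le_max_right 0 (1 - b)])

/-- the standard convolution-type integral estimate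
`∫_0^t (t-s)^{-a} (1+s)^{-b} ds ≤ C (1+t)^{-min(a, a+b-1)}`
for `a ∈ [0,1)`, `b ≥ 0` with `a + b ≥ 1` and `b ≠ 1`. -/
theorem singular_temporal_convolution_estimate (a b : ℝ)
    (ha0 : 0 ≤ a) (ha1 : a < 1) (hb0 : 0 ≤ b) (hab : 1 ≤ a + b) (hb1 : b ≠ 1) :
    ∃ C : ℝ, 1 ≤ C ∧
      ∀ t : ℝ, 0 < t →
        (∫ s in (0 : ℝ)..t, (t - s) ^ (-a) * (1 + s) ^ (-b)) ≤
          C * (1 + t) ^ (-min a (a + b - 1)) := by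
  have hK : 0 ≤ |1 - b|⁻¹ := inv_nonneg.2 (abs_nonneg _)
  have hA : 0 ≤ (1 - a)⁻¹ := inv_nonneg.2 (by linarith)
  refine ⟨(2 * (1 + |1 - b|⁻¹) + (1 - a)⁻¹) * 2, by linarith, fun t ht => ?_⟩
  obtain ⟨h, rfl⟩ : ∃ h, t = 2 * h := ⟨t / 2, by ring⟩
  have hh : 0 < h := by linarith
  have hm : max 0 (1 - b) - a = -min a (a + b - 1) := by
    rcases le_total b 1 with hb | hb
    · rw [max_eq_right (by linarith), min_eq_right (by linarith)]; ring
    · rw [max_eq_left (by linarith), min_eq_left (by linarith)]; ring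
  have hm0 : 0 ≤ min a (a + b - 1) := le_min ha0 (by linarith)
  have hm1 : min a (a + b - 1) ≤ 1 := (min_le_left _ _).trans ha1.le
  have hleft := integral_convolution_left_half_le ha0 ha1 hb0 hb1 hh
  have hright := integral_convolution_right_half_le ha1 hb0 hh
  rw [hm] at hleft hright
  set m := min a (a + b - 1)
  have hscale : (1 + h) ^ (-m) ≤ 2 * (1 + 2 * h) ^ (-m) :=
    rpow_neg_le_two_mul_rpow_neg hm0 hm1 (by linarith) (by linarith) (by linarith)
  rw [← intervalIntegral.integral_add_adjacent_intervals
    (intervalIntegrable_sub_rpow_mul_one_add_rpow ha1 b _ le_rfl hh.le)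
    (intervalIntegrable_sub_rpow_mul_one_add_rpow ha1 b _ hh.le (by linarith))]
  calc _ ≤ (2 * (1 + |1 - b|⁻¹) + (1 - a)⁻¹) * (1 + h) ^ (-m) := by linarith
    _ ≤ (2 * (1 + |1 - b|⁻¹) + (1 - a)⁻¹) * (2 * (1 + 2 * h) ^ (-m)) :=
        mul_le_mul_of_nonneg_left hscale (by linarith)
    _ = _ := by ring
end
end
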